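/- arXiv:2007.09349 — 2 statements merged into one kernel-verified Lean document; each statement's English description precedes it below -/
import Mathlib

section
/- Let X ~ E_n(μ, Σ, g_n), X* ~ E_n(μ, Σ, Ḡ_n) and X** ~ E_n(μ, Σ, 𝒢̄_n), and let p₁,…,p_n be nonnegative integers with p₁ ≥ 2 such that all the expectations below exist and the regularity conditions of Theorem 1 hold for f(x) = x₁^{p₁−2} ∏_{k=2}^n x_k^{p_k}. Then E[∏_{i=1}^n X_i^{p_i}] = b_n* σ₁₁ E[(X*₁)^{p₁−2} ∏_{k=2}^n (X*_k)^{p_k}] + b_n** { σ₁₁²(p₁−2)(p₁−3) E[(X**₁)^{p₁−4} ∏_{k=2}^n (X**_k)^{p_k}] + 2 Σ_{j=2}^n σ₁₁ σ_{j1}(p₁−2)p_j E[(X**₁)^{p₁−3}(X**_j)^{p_j−1} ∏_{k=2,k≠j}^n (X**_k)^{p_k}] + Σ_{j=2}^n σ_{j1}² p_j(p_j−1) E[(X**₁)^{p₁−2}(X**_j)^{p_j−2} ∏_{k=2,k≠j}^n (X**_k)^{p_k}] + Σ_{j=2}^n Σ_{i=2,i≠j}^n σ_{j1}σ_{i1}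 p_j p_i E[(X**_i)^{p_i−1}(X**_j)^{p_j−1}(X**₁)^{p₁−2} ∏_{k=2,k≠i,j}^n (X**_k)^{p_k}] } + 2 b_n* μ₁ { σ₁₁(p₁−2) E[(X*₁)^{p₁−3} ∏_{k=2}^n (X*_k)^{p_k}] + Σ_{j=2}^n σ_{j1} p_j E[(X*_j)^{p_j−1}(X*₁)^{p₁−2} ∏_{k=2,k≠j}^n (X*_k)^{p_k}] } + μ₁² E[X₁^{p₁−2} ∏_{k=2}^n X_k^{p_k}]. -/
open MeasureTheory Real Set Filter Matrix Function

/-- The normalizing constant `c_n = (Γ(n/2)/(2π)^(n/2))(∫₀^∞ t^(n/2-1) g(t) dt)⁻¹`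
of a density generator `g`. -/
noncomputable def normConst (n : ℕ) (g : ℝ → ℝ) : ℝ :=
  Real.Gamma ((n : ℝ) / 2) / (2 * π) ^ ((n : ℝ) / 2) *
    (∫ t in Ioi (0 : ℝ), t ^ ((n : ℝ) / 2 - 1) * g t)⁻¹

/-- The density `(c_n/√|Σ|) g((x-μ)ᵀ Σ⁻¹ (x-μ)/2)` of an elliptical random vector
`X ~ E_n(μ, Σ, g)`. -/
noncomputable def ePdf (n : ℕ) (μ : Fin n → ℝ) (S : Matrix (Fin n) (Fin n) ℝ) (g : ℝ → ℝ)
    (x : Fin n → ℝ) : ℝ :=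
  normConst n g / Real.sqrt S.det * g (1 / 2 * ((x - μ) ⬝ᵥ S⁻¹.mulVec (x - μ)))

/-- First partial derivative `∇_i f`. -/
noncomputable def pd (n : ℕ) (f : (Fin n → ℝ) → ℝ) (i : Fin n) (x : Fin n → ℝ) : ℝ :=
  fderiv ℝ f x (Pi.single i 1)

/-- Second partial derivative `∇_{i,j} f`. -/
noncomputable def pd2 (n : ℕ) (f : (Fin n → ℝ) → ℝ) (i j : Fin n) (x : Fin n → ℝ) : ℝ :=
  fderiv ℝ (fun y => pd n f j y) x (Pi.single i 1)

/-- The product moment `E[∏ᵢ Xᵢ^(qᵢ)]` of `X ~ E_n(μ, Σ, g)`. -/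
noncomputable def eMom (n : ℕ) (μ : Fin n → ℝ) (S : Matrix (Fin n) (Fin n) ℝ) (g : ℝ → ℝ)
    (q : Fin n → ℕ) : ℝ :=
  ∫ x : Fin n → ℝ, (∏ k : Fin n, (x k) ^ q k) * ePdf n μ S g x

/-!
Along a column `S eᵢ` of the scale matrix, the exponent `Q x = (x-μ)ᵀ S⁻¹ (x-μ) / 2` has derivative
`xᵢ - μᵢ`. Hence `φ · Ḡ(Q)`, for the cumulative generator `Ḡ` of `g`, has directional derivative
`D φ · Ḡ(Q) - φ · (xᵢ - μᵢ) · g(Q)`, and the integral of a directional derivative vanishes by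
translation invariance. This gives the Stein identity
`E[(Xᵢ - μᵢ) φ(X)] = (c / c*) E[D φ(X*)]`, which for a monomial `φ` is a one-step recursion between
the moments of `X` and those of `X*`. The theorem comes from three uses of that recursion: two to
lower the exponent of `Xᵢ` by two, and one to pass from `X*` to `X**`. Integrating over unit
segments in the direction `S eᵢ`, rather than over whole lines, leaves no boundary terms.
-/

section Segments

variable {E V : Type*} [NormedAddCommGroup E] [NormedSpace ℝ E] [MeasurableSpace E] [BorelSpace E]
  [SecondCountableTopology E] {ν : Measure E} [SFinite ν] [ν.IsAddRightInvariant]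
  [NormedAddCommGroup V] {F D : E → V}

lemma measurePreserving_shear (κ : Measure ℝ) [SFinite κ] (v : E) :
    MeasurePreserving (fun z : ℝ × E => (z.1, z.2 + z.1 • v)) (κ.prod ν) (κ.prod ν) :=
  (MeasurePreserving.id κ).skew_product (by fun_prop)
    (Eventually.of_forall fun t => map_add_right_eq_self ν (t • v))

lemma integrable_comp_shear (hD : Integrable D ν) (κ : Measure ℝ) [IsFiniteMeasure κ] (v : E) :
    Integrable (fun z : ℝ × E => D (z.2 + z.1 • v)) (κ.prod ν) :=
  (measurePreserving_shear κ v).integrable_comp_of_integrable (hD.comp_snd κ)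

lemma ae_forall_intervalIntegrable_line (hD : Integrable D ν) (v : E) :
    ∀ᵐ x ∂ν, ∀ a b : ℝ, IntervalIntegrable (fun t => D (x + t • v)) volume a b := by
  have h_slices (N : ℕ) : ∀ᵐ x ∂ν, IntegrableOn (fun t => D (x + t • v)) (Ioc (-N : ℝ) N) :=
    (integrable_comp_shear hD (volume.restrict (Ioc (-N : ℝ) N)) v).prod_left_ae
  filter_upwards [ae_all_iff.2 h_slices] with x hx a b
  obtain ⟨N, hN⟩ := exists_nat_gt (max |a| |b|)
  have ha := abs_lt.1 ((le_max_left _ _).trans_lt hN)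
  have hb := abs_lt.1 ((le_max_right _ _).trans_lt hN)
  exact intervalIntegrable_iff.2 <| (hx N).mono_set <|
    Ioc_subset_Ioc (le_min ha.1.le hb.1.le) (max_le ha.2.le hb.2.le)

theorem integral_eq_zero_of_ae_sub_eq_integral [NormedSpace ℝ V] [CompleteSpace V]
    (hF : Integrable F ν) (hD : Integrable D ν) (v : E)
    (h : ∀ᵐ x ∂ν, F (x + v) - F x = ∫ t in (0 : ℝ)..1, D (x + t • v)) :
    ∫ x, D x ∂ν = 0 := by
  have h_translate (t : ℝ) : ∫ x, D (x + t • v) ∂ν = ∫ x, D x ∂ν :=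
    integral_add_right_eq_self D _
  have h_swap : ∫ t in (0 : ℝ)..1, (∫ x, D (x + t • v) ∂ν) =
      ∫ x, (∫ t in (0 : ℝ)..1, D (x + t • v)) ∂ν := by
    simp only [intervalIntegral.integral_of_le zero_le_one]
    exact integral_integral_swap (f := fun (t : ℝ) x => D (x + t • v))
      (integrable_comp_shear hD (volume.restrict (Ioc 0 1)) v)
  calc ∫ x, D x ∂ν
      = ∫ t in (0 : ℝ)..1, (∫ x, D (x + t • v) ∂ν) := by simp [h_translate]
    _ = ∫ x, (F (x + v) - F x) ∂ν := h_swap.trans (integral_congr_ae (h.mono fun x hx => hx.symm))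
    _ = 0 := by
        rw [integral_sub (hF.comp_add_right v) hF, integral_add_right_eq_self F v, sub_self]

end Segments

section LineIntegrals

variable {q q' g : ℝ → ℝ} {t₀ a b : ℝ}

lemma deriv_nonneg_or_nonpos_of_unimodal (hneg : ∀ t ≤ t₀, q' t ≤ 0) (hpos : ∀ t ≥ t₀, 0 ≤ q' t)
    (b : ℝ) :
    (∀ t ∈ Ioo (min t₀ b) (max t₀ b), 0 ≤ q' t) ∨ ∀ t ∈ Ioo (min t₀ b) (max t₀ b), q' t ≤ 0 := by
  rcases le_total t₀ b with h | h
  · exact .inl fun t ht => hpos t (min_eq_left h ▸ ht.1.le)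
  · exact .inr fun t ht => hneg t (max_eq_left h ▸ ht.2.le)

lemma integral_comp_mul_deriv_of_unimodal (hq : ∀ t, HasDerivAt q (q' t) t)
    (hneg : ∀ t ≤ t₀, q' t ≤ 0) (hpos : ∀ t ≥ t₀, 0 ≤ q' t) (b : ℝ) :
    ∫ t in t₀..b, g (q t) * q' t = ∫ u in q t₀..q b, g u := by
  have hcont : ContinuousOn q (uIcc t₀ b) := fun t _ => (hq t).continuousAt.continuousWithinAt
  rcases deriv_nonneg_or_nonpos_of_unimodal hneg hpos b with h | h
  · exact intervalIntegral.integral_comp_mul_deriv_of_deriv_nonneg hcont (fun t _ => hq t) h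
  · exact intervalIntegral.integral_comp_mul_deriv_of_deriv_nonpos hcont (fun t _ => hq t) h

lemma intervalIntegrable_of_comp_mul_deriv_of_unimodal (hq : ∀ t, HasDerivAt q (q' t) t)
    (hneg : ∀ t ≤ t₀, q' t ≤ 0) (hpos : ∀ t ≥ t₀, 0 ≤ q' t)
    (hint : IntervalIntegrable (fun t => g (q t) * q' t) volume t₀ b) :
    IntervalIntegrable g volume (q t₀) (q b) := by
  have hcont : ContinuousOn q (uIcc t₀ b) := fun t _ => (hq t).continuousAt.continuousWithinAt
  rcases deriv_nonneg_or_nonpos_of_unimodal hneg hpos b with h | h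
  · exact (intervalIntegral.integrable_comp_mul_deriv_iff_of_deriv_nonneg hcont
      (fun t _ => hq t) h).1 hint
  · exact (intervalIntegral.integrable_comp_mul_deriv_iff_of_deriv_nonpos hcont
      (fun t _ => hq t) h).1 hint

lemma integrableOn_Ioi_of_intervalIntegrable (hab : IntervalIntegrable g volume a b)
    (hb : IntegrableOn g (Ioi b)) : IntegrableOn g (Ioi a) := by
  refine ((intervalIntegrable_iff.1 hab).union hb).mono_set fun v hv => ?_
  rcases le_or_gt v b with h | h
  · exact .inl ⟨(min_le_left _ _).trans_lt hv, h.trans (le_max_right _ _)⟩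
  · exact .inr h

theorem integral_comp_mul_deriv_eq_integral_Ioi_sub (hq : ∀ t, HasDerivAt q (q' t) t)
    (hneg : ∀ t ≤ t₀, q' t ≤ 0) (hpos : ∀ t ≥ t₀, 0 ≤ q' t) (htop : Tendsto q atTop atTop)
    {u : ℝ} (hg : IntegrableOn g (Ioi u))
    (hint : ∀ a b, IntervalIntegrable (fun t => g (q t) * q' t) volume a b) (a b : ℝ) :
    ∫ t in a..b, g (q t) * q' t = (∫ v in Ioi (q a), g v) - ∫ v in Ioi (q b), g v := by
  have hgq (c : ℝ) : IntervalIntegrable g volume (q t₀) (q c) :=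
    intervalIntegrable_of_comp_mul_deriv_of_unimodal hq hneg hpos (hint t₀ c)
  obtain ⟨T, hT⟩ := (htop.eventually_ge_atTop u).exists
  have htail (c : ℝ) : IntegrableOn g (Ioi (q c)) :=
    integrableOn_Ioi_of_intervalIntegrable ((hgq c).symm.trans (hgq T))
      (hg.mono_set (Ioi_subset_Ioi hT))
  rw [intervalIntegral.integral_Ioi_sub_Ioi' (htail a) (htail b),
    ← intervalIntegral.integral_interval_sub_left (hint t₀ b) (hint t₀ a),
    integral_comp_mul_deriv_of_unimodal hq hneg hpos,
    integral_comp_mul_deriv_of_unimodal hq hneg hpos,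
    intervalIntegral.integral_interval_sub_left (hgq b) (hgq a)]

theorem integral_deriv_mul_add_mul_eq_sub {u u' w k : ℝ → ℝ} (hu : ∀ t, HasDerivAt u (u' t) t)
    (hu' : Continuous u') (hk : IntervalIntegrable k volume a b)
    (hw : ∀ t, w t - w a = ∫ s in a..t, k s) :
    ∫ t in a..b, (u' t * w t + u t * k t) = u b * w b - u a * w a := by
  have hderiv : deriv u = u' := funext fun t => (hu t).deriv
  have hu_smooth : ContDiff ℝ 1 u :=
    contDiff_one_iff_deriv.2 ⟨fun t => (hu t).differentiableAt, hderiv ▸ hu'⟩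
  have hw_eq : w = fun t => w a + ∫ s in a..t, k s := funext fun t => by rw [← hw]; ring
  have hw_ac : AbsolutelyContinuousOnInterval w a b := by
    have hconst : ContDiff ℝ 1 fun _ : ℝ => w a := contDiff_const
    rw [hw_eq]
    exact hconst.contDiffOn.absolutelyContinuousOnInterval.fun_add
      (hk.absolutelyContinuousOnInterval_intervalIntegral left_mem_uIcc)
  rw [← hu_smooth.contDiffOn.absolutelyContinuousOnInterval.integral_deriv_mul_eq_sub hw_ac]
  refine intervalIntegral.integral_congr_ae ?_
  filter_upwards [hk.ae_hasDerivAt_integral] with t ht hmem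
  have hwt : HasDerivAt w (k t) t := by
    rw [hw_eq]
    exact (ht (uIoc_subset_uIcc hmem) a left_mem_uIcc).const_add _
  rw [hderiv, hwt.deriv]

end LineIntegrals

section Mahalanobis

variable {ι : Type*} [Fintype ι] [DecidableEq ι] {μ : ι → ℝ} {S : Matrix ι ι ℝ}

/-- Half the squared Mahalanobis distance `(x-μ)ᵀ S⁻¹ (x-μ) / 2` from `x` to `μ`, the argument of
the density generator in `ePdf`. -/
noncomputable def halfSqMahalanobis (μ : ι → ℝ) (S : Matrix ι ι ℝ) (x : ι → ℝ) : ℝ :=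
  1 / 2 * ((x - μ) ⬝ᵥ S⁻¹ *ᵥ (x - μ))

lemma halfSqMahalanobis_add_smul_col (hS : S.PosDef) (x : ι → ℝ) (i : ι) (t : ℝ) :
    halfSqMahalanobis μ S (x + t • S.col i) =
      halfSqMahalanobis μ S x + t * (x i - μ i) + t ^ 2 / 2 * S i i := by
  have hinv : S⁻¹ *ᵥ S.col i = Pi.single i 1 := by
    rw [← mulVec_single_one, mulVec_mulVec,
      nonsing_inv_mul _ ((isUnit_iff_isUnit_det S).1 hS.isUnit), one_mulVec]
  have hsymm : S.col i ⬝ᵥ S⁻¹ *ᵥ (x - μ) = x i - μ i := by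
    have hT : (S⁻¹)ᵀ = S⁻¹ := by simpa using hS.isHermitian.inv.eq
    rw [dotProduct_mulVec, ← mulVec_transpose, hT, hinv, single_one_dotProduct, Pi.sub_apply]
  have hx : x + t • S.col i - μ = x - μ + t • S.col i := by abel
  simp only [halfSqMahalanobis, hx, mulVec_add, mulVec_smul, hinv, dotProduct_add, add_dotProduct,
    smul_dotProduct, dotProduct_smul, hsymm, dotProduct_single_one, Pi.add_apply, Pi.sub_apply,
    Pi.smul_apply, col_apply, smul_eq_mul]
  ring

lemma hasDerivAt_halfSqMahalanobis_line (hS : S.PosDef) (x : ι → ℝ) (i : ι) (t : ℝ) :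
    HasDerivAt (fun s : ℝ => halfSqMahalanobis μ S (x + s • S.col i))
      ((x + t • S.col i) i - μ i) t := by
  simp only [halfSqMahalanobis_add_smul_col hS]
  have h := (((hasDerivAt_id t).mul_const (x i - μ i)).const_add (halfSqMahalanobis μ S x)).add
    ((((hasDerivAt_id t).pow 2).div_const 2).mul_const (S i i))
  refine h.congr_deriv ?_
  simp only [one_mul, mul_one, id_eq, Nat.cast_ofNat, Nat.add_one_sub_one, pow_one, Pi.add_apply,
    Pi.smul_apply, col_apply, smul_eq_mul]
  ring

lemma tendsto_halfSqMahalanobis_line (hS : S.PosDef) (x : ι → ℝ) (i : ι) :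
    Tendsto (fun s : ℝ => halfSqMahalanobis μ S (x + s • S.col i)) atTop atTop := by
  have h : Tendsto (fun s : ℝ => s * (x i - μ i + s * (S i i / 2))) atTop atTop :=
    tendsto_id.atTop_mul_atTop₀ <| tendsto_atTop_add_const_left _ _ <|
      tendsto_id.atTop_mul_const (half_pos hS.diag_pos)
  refine (tendsto_atTop_add_const_left _ (halfSqMahalanobis μ S x) h).congr fun s => ?_
  rw [halfSqMahalanobis_add_smul_col hS]
  ring

variable {g G : ℝ → ℝ}

lemma ae_tail_halfSqMahalanobis_sub_eq_integral (hS : S.PosDef) (hG : ∀ u, G u = ∫ v in Ioi u, g v)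
    {u : ℝ} (hg : IntegrableOn g (Ioi u)) (i : ι)
    (hk : Integrable fun x => (x i - μ i) * g (halfSqMahalanobis μ S x)) :
    ∀ᵐ x : ι → ℝ, ∀ a b : ℝ,
      G (halfSqMahalanobis μ S (x + b • S.col i)) - G (halfSqMahalanobis μ S (x + a • S.col i)) =
        ∫ t in a..b, -(((x + t • S.col i) i - μ i) *
          g (halfSqMahalanobis μ S (x + t • S.col i))) := by
  filter_upwards [ae_forall_intervalIntegrable_line hk (S.col i)] with x hx a b
  have hSi : 0 < S i i := hS.diag_pos
  have hvertex (t : ℝ) : (x + t • S.col i) i - μ i = S i i * (t - (μ i - x i) / S i i) := by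
    simp only [Pi.add_apply, Pi.smul_apply, col_apply, smul_eq_mul]
    field_simp
    ring
  have hsub := integral_comp_mul_deriv_eq_integral_Ioi_sub (t₀ := (μ i - x i) / S i i)
    (hasDerivAt_halfSqMahalanobis_line (μ := μ) hS x i)
    (fun t ht => hvertex t ▸ mul_nonpos_of_nonneg_of_nonpos hSi.le (sub_nonpos.2 ht))
    (fun t ht => hvertex t ▸ mul_nonneg hSi.le (sub_nonneg.2 ht))
    (tendsto_halfSqMahalanobis_line hS x i) hg (by simpa only [mul_comm] using hx) a b
  simp only [← hG] at hsub
  rw [intervalIntegral.integral_neg, ← neg_sub, ← hsub]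
  simp only [mul_comm]

theorem stein_identity_halfSqMahalanobis (hS : S.PosDef) (hG : ∀ u, G u = ∫ v in Ioi u, g v)
    {u : ℝ} (hg : IntegrableOn g (Ioi u)) (i : ι) {φ : (ι → ℝ) → ℝ} (hφ : ContDiff ℝ 1 φ)
    (hk : Integrable fun x => (x i - μ i) * g (halfSqMahalanobis μ S x))
    (hφk : Integrable fun x => φ x * ((x i - μ i) * g (halfSqMahalanobis μ S x)))
    (hφG : Integrable fun x => φ x * G (halfSqMahalanobis μ S x))
    (hdφG : Integrable fun x => fderiv ℝ φ x (S.col i) * G (halfSqMahalanobis μ S x)) :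
    ∫ x, φ x * ((x i - μ i) * g (halfSqMahalanobis μ S x)) =
      ∫ x, fderiv ℝ φ x (S.col i) * G (halfSqMahalanobis μ S x) := by
  have hline (x : ι → ℝ) (t : ℝ) : HasDerivAt (fun s : ℝ => φ (x + s • S.col i))
      (fderiv ℝ φ (x + t • S.col i) (S.col i)) t := by
    have hx : HasDerivAt (fun s : ℝ => x + s • S.col i) (S.col i) t := by
      simpa using ((hasDerivAt_id t).smul_const (S.col i)).const_add x
    exact ((hφ.differentiable one_ne_zero _).hasFDerivAt).comp_hasDerivAt t hx
  have hline_cont (x : ι → ℝ) : Continuous fun t : ℝ => fderiv ℝ φ (x + t • S.col i) (S.col i) :=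
    ((hφ.continuous_fderiv one_ne_zero).comp (by fun_prop)).clm_apply continuous_const
  have hzero := integral_eq_zero_of_ae_sub_eq_integral hφG (hdφG.sub hφk) (S.col i) (by
    filter_upwards [ae_forall_intervalIntegrable_line hk (S.col i),
      ae_tail_halfSqMahalanobis_sub_eq_integral hS hG hg i hk] with x hx_int hx_sub
    have hprod := integral_deriv_mul_add_mul_eq_sub (hline x) (hline_cont x) (hx_int 0 1).neg
      (hx_sub 0)
    simpa [sub_eq_add_neg] using hprod.symm)
  simp only [Pi.sub_apply] at hzero
  rw [integral_sub hdφG hφk, sub_eq_zero] at hzero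
  exact hzero.symm

end Mahalanobis

section MultiIndices

variable {ι : Type*} [DecidableEq ι]

lemma sub_single_one_eq_update (q : ι → ℕ) (j : ι) :
    q - Pi.single j 1 = update q j (q j - 1) := by
  ext k
  by_cases hk : k = j
  · subst hk; simp
  · simp [hk]

lemma update_add_single_one (q : ι → ℕ) (j : ι) (m : ℕ) :
    update q j m + Pi.single j 1 = update q j (m + 1) := by
  ext k
  by_cases hk : k = j
  · subst hk; simp
  · simp [hk]

end MultiIndices

section Monomials

variable {ι : Type*} [Fintype ι]

/-- The monomial `∏ₖ xₖ ^ qₖ` as a function of `x`, with multi-index `q`. -/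
def monomialFun (q : ι → ℕ) (x : ι → ℝ) : ℝ := ∏ k, x k ^ q k

lemma contDiff_monomialFun (q : ι → ℕ) : ContDiff ℝ 1 (monomialFun q) := by
  unfold monomialFun
  fun_prop

variable [DecidableEq ι]

lemma monomialFun_add_single (q : ι → ℕ) (i : ι) (x : ι → ℝ) :
    monomialFun (q + Pi.single i 1) x = x i * monomialFun q x := by
  simp only [monomialFun, Pi.add_apply, pow_add, Finset.prod_mul_distrib, Pi.single_apply,
    pow_ite, pow_one, pow_zero, Finset.prod_ite_eq', Finset.mem_univ, if_true]
  ring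

/-- The action on moment sequences of the directional derivative `D_s = ∑ⱼ sⱼ ∂ⱼ`: if
`M q = E[∏ₖ Xₖ ^ qₖ]`, then `momentLowering s M q = E[(D_s ∏ₖ xₖ ^ qₖ)(X)]`. Subtraction of
multi-indices is truncated, which is harmless since the coefficient `qⱼ` vanishes there. -/
def momentLowering (s : ι → ℝ) (M : (ι → ℕ) → ℝ) (q : ι → ℕ) : ℝ :=
  ∑ j, s j * q j * M (q - Pi.single j 1)

lemma fderiv_monomialFun_apply (q : ι → ℕ) (x v : ι → ℝ) :
    fderiv ℝ (monomialFun q) x v = momentLowering v (fun r => monomialFun r x) q := by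
  have hderiv : HasFDerivAt (monomialFun q) _ x := HasFDerivAt.finsetProd (u := Finset.univ)
    fun j _ => (hasFDerivAt_apply (𝕜 := ℝ) (F' := fun _ : ι => ℝ) j x).pow (q j)
  rw [hderiv.fderiv]
  simp only [momentLowering, _root_.sum_apply, _root_.smul_apply, ContinuousLinearMap.proj_apply,
    smul_eq_mul, nsmul_eq_mul]
  refine Finset.sum_congr rfl fun j _ => ?_
  have hlower : monomialFun (q - Pi.single j 1) x =
      x j ^ (q j - 1) * ∏ k ∈ Finset.univ.erase j, x k ^ q k := by
    rw [monomialFun, ← Finset.mul_prod_erase Finset.univ _ (Finset.mem_univ j)]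
    congr 1
    · simp
    · refine Finset.prod_congr rfl fun k hk => ?_
      simp [Pi.single_eq_of_ne (Finset.ne_of_mem_erase hk)]
  rw [hlower]
  ring

lemma momentLowering_add_single (s : ι → ℝ) (M : (ι → ℕ) → ℝ) (q : ι → ℕ) (i : ι) :
    momentLowering s M (q + Pi.single i 1) =
      s i * M q + momentLowering s (fun r => M (r + Pi.single i 1)) q := by
  have hdiag : ∑ j, s j * ((Pi.single i 1 : ι → ℕ) j : ℝ) *
      M (q + Pi.single i 1 - Pi.single j 1) = s i * M q := by
    rw [Fintype.sum_eq_single i fun j hj => by simp [hj]]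
    simp
  have hcomm (j : ι) : (q j : ℝ) * M (q + Pi.single i 1 - Pi.single j 1) =
      q j * M (q - Pi.single j 1 + Pi.single i 1) := by
    rcases Nat.eq_zero_or_pos (q j) with hj | hj
    · simp [hj]
    · rw [tsub_add_eq_add_tsub (update_le_iff.2 ⟨hj, by simp⟩)]
  rw [← hdiag, momentLowering, momentLowering, ← Finset.sum_add_distrib]
  refine Finset.sum_congr rfl fun j _ => ?_
  rw [mul_assoc (s j) (q j : ℝ), ← hcomm, Pi.add_apply, Nat.cast_add]
  ring

lemma natCast_mul_natCast_sub_one (m : ℕ) : (m : ℝ) * ((m - 1 : ℕ) : ℝ) = m * (m - 1) := by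
  cases m <;> simp

lemma sum_sum_eq_add_sum_erase (f : ι → ι → ℝ) (a : ι) :
    ∑ j, ∑ k, f j k = f a a + ∑ j ∈ Finset.univ.erase a, (f a j + f j a) +
      ∑ j ∈ Finset.univ.erase a, f j j +
      ∑ j ∈ Finset.univ.erase a, ∑ k ∈ (Finset.univ.erase a).erase j, f j k := by
  have hrow (j : ι) (hj : j ∈ Finset.univ.erase a) :
      ∑ k, f j k = f j a + (f j j + ∑ k ∈ (Finset.univ.erase a).erase j, f j k) := by
    rw [← Finset.add_sum_erase _ _ (Finset.mem_univ a), ← Finset.add_sum_erase _ _ hj]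
  rw [← Finset.add_sum_erase _ _ (Finset.mem_univ a), Finset.sum_congr rfl hrow,
    ← Finset.add_sum_erase _ (f a) (Finset.mem_univ a)]
  simp only [Finset.sum_add_distrib]
  ring

lemma momentLowering_update_sub_two (s : ι → ℝ) (M : (ι → ℕ) → ℝ) {p : ι → ℕ} {a : ι}
    (hp : 2 ≤ p a) :
    momentLowering s M (update p a (p a - 2)) =
      s a * ((p a : ℝ) - 2) * M (update p a (p a - 3)) +
        ∑ j ∈ Finset.univ.erase a, s j * (p j : ℝ) *
          M (update (update p a (p a - 2)) j (p j - 1)) := by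
  rw [momentLowering, ← Finset.add_sum_erase _ _ (Finset.mem_univ a)]
  congr 1
  · simp [sub_single_one_eq_update, Nat.sub_sub, Nat.cast_sub hp]
  · refine Finset.sum_congr rfl fun j hj => ?_
    simp only [sub_single_one_eq_update, update_of_ne (Finset.ne_of_mem_erase hj)]

lemma momentLowering_momentLowering_update_sub_two (s : ι → ℝ) (M : (ι → ℕ) → ℝ) {p : ι → ℕ}
    {a : ι} (hp : 2 ≤ p a) :
    momentLowering s (momentLowering s M) (update p a (p a - 2)) =
      s a ^ 2 * ((p a : ℝ) - 2) * ((p a : ℝ) - 3) * M (update p a (p a - 4)) +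
        2 * ∑ j ∈ Finset.univ.erase a, s a * s j * ((p a : ℝ) - 2) * (p j : ℝ) *
          M (update (update p a (p a - 3)) j (p j - 1)) +
        ∑ j ∈ Finset.univ.erase a, s j ^ 2 * (p j : ℝ) * ((p j : ℝ) - 1) *
          M (update (update p a (p a - 2)) j (p j - 2)) +
        ∑ j ∈ Finset.univ.erase a, ∑ i ∈ (Finset.univ.erase a).erase j,
          s j * s i * (p j : ℝ) * (p i : ℝ) *
            M (update (update (update p a (p a - 2)) j (p j - 1)) i (p i - 1)) := by
  have hpa : ((p a - 2 : ℕ) : ℝ) = (p a : ℝ) - 2 := Nat.cast_sub hp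
  simp only [momentLowering, Finset.mul_sum, sub_single_one_eq_update]
  rw [sum_sum_eq_add_sum_erase _ a]
  refine congr_arg₂ _ (congr_arg₂ _ (congr_arg₂ _ ?_ ?_) ?_) ?_
  · have h := natCast_mul_natCast_sub_one (p a - 2)
    simp only [update_self, update_idem, Nat.sub_sub, hpa] at h ⊢
    linear_combination s a ^ 2 * M (update p a (p a - 4)) * h
  · refine Finset.sum_congr rfl fun j hj => ?_
    have hja := Finset.ne_of_mem_erase hj
    have hswap : update (update (update p a (p a - 2)) j (p j - 1)) a (p a - 3) =
        update (update p a (p a - 3)) j (p j - 1) := by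
      rw [update_comm hja, update_idem]
    simp only [update_self, update_idem, update_of_ne hja, update_of_ne hja.symm, hpa, Nat.sub_sub,
      Nat.reduceAdd, hswap]
    ring
  · refine Finset.sum_congr rfl fun j hj => ?_
    simp only [update_self, update_of_ne (Finset.ne_of_mem_erase hj), update_idem, Nat.sub_sub]
    linear_combination s j ^ 2 * M (update (update p a (p a - 2)) j (p j - 2)) *
      natCast_mul_natCast_sub_one (p j)
  · refine Finset.sum_congr rfl fun j hj => Finset.sum_congr rfl fun i hi => ?_
    have hia := Finset.ne_of_mem_erase (Finset.mem_of_mem_erase hi)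
    simp only [update_of_ne (Finset.ne_of_mem_erase hj), update_of_ne (Finset.ne_of_mem_erase hi),
      update_of_ne hia]
    ring

end Monomials

section Moments

variable {n : ℕ} {μ : Fin n → ℝ} {S : Matrix (Fin n) (Fin n) ℝ} {g G GG : ℝ → ℝ} {i : Fin n}

lemma normConst_ne_zero (hn : 0 < n) (hg : 0 < ∫ t in Ioi (0 : ℝ), t ^ ((n : ℝ) / 2 - 1) * g t) :
    normConst n g ≠ 0 := by
  have : 0 < Gamma ((n : ℝ) / 2) := Gamma_pos_of_pos (by positivity)
  unfold normConst
  positivity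

lemma exists_integrableOn_Ioi_of_normConst_ne_zero (hG : ∀ u, G u = ∫ v in Ioi u, g v)
    (hcG : normConst n G ≠ 0) : ∃ u, IntegrableOn g (Ioi u) := by
  contrapose! hcG
  have hG0 : G = 0 := funext fun u => (hG u).trans (integral_undef (hcG u))
  simp [normConst, hG0]

theorem stein_identity_ePdf (hS : S.PosDef) (hG : ∀ u, G u = ∫ v in Ioi u, g v)
    (hcg : normConst n g ≠ 0) (hcG : normConst n G ≠ 0) {φ : (Fin n → ℝ) → ℝ}
    (hφ : ContDiff ℝ 1 φ)
    (hk : Integrable fun x => (x i - μ i) * ePdf n μ S g x)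
    (hφk : Integrable fun x => φ x * ((x i - μ i) * ePdf n μ S g x))
    (hφG : Integrable fun x => φ x * ePdf n μ S G x)
    (hdφG : Integrable fun x => fderiv ℝ φ x (S.col i) * ePdf n μ S G x) :
    ∫ x, φ x * ((x i - μ i) * ePdf n μ S g x) =
      normConst n g / normConst n G * ∫ x, fderiv ℝ φ x (S.col i) * ePdf n μ S G x := by
  obtain ⟨u, hg⟩ := exists_integrableOn_Ioi_of_normConst_ne_zero hG hcG
  have hdet : √S.det ≠ 0 := (sqrt_pos.2 hS.det_pos).ne'
  have hscale_g := (div_ne_zero hcg hdet).isUnit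
  have hscale_G := (div_ne_zero hcG hdet).isUnit
  have hePdf (h : ℝ → ℝ) (x : Fin n → ℝ) :
      ePdf n μ S h x = normConst n h / √S.det * h (halfSqMahalanobis μ S x) := rfl
  simp only [hePdf, mul_left_comm _ (_ / √S.det)] at hk hφk hφG hdφG ⊢
  rw [integrable_const_mul_iff hscale_g] at hk hφk
  rw [integrable_const_mul_iff hscale_G] at hφG hdφG
  rw [integral_const_mul, integral_const_mul,
    stein_identity_halfSqMahalanobis hS hG hg i hφ hk hφk hφG hdφG]
  field_simp

/-- All moments `E[∏ₖ Xₖ ^ qₖ]` with `q ≤ p` of `X ~ E_n(μ, S, g)` exist; multi-indices are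
compared componentwise. -/
def HasMomentsUpTo (n : ℕ) (μ : Fin n → ℝ) (S : Matrix (Fin n) (Fin n) ℝ) (g : ℝ → ℝ)
    (p : Fin n → ℕ) : Prop :=
  ∀ q ≤ p, Integrable fun x => monomialFun q x * ePdf n μ S g x

lemma HasMomentsUpTo.mono {p q : Fin n → ℕ} (h : HasMomentsUpTo n μ S g p) (hqp : q ≤ p) :
    HasMomentsUpTo n μ S g q :=
  fun r hr => h r (hr.trans hqp)

theorem eMom_add_single (hS : S.PosDef) (hG : ∀ u, G u = ∫ v in Ioi u, g v)
    (hcg : normConst n g ≠ 0) (hcG : normConst n G ≠ 0) {q : Fin n → ℕ}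
    (hg_mom : HasMomentsUpTo n μ S g (q + Pi.single i 1)) (hG_mom : HasMomentsUpTo n μ S G q) :
    eMom n μ S g (q + Pi.single i 1) = μ i * eMom n μ S g q +
      normConst n g / normConst n G * momentLowering (S.col i) (eMom n μ S G) q := by
  have hq : Integrable fun x => monomialFun q x * ePdf n μ S g x := hg_mom q le_self_add
  have hqi : Integrable fun x => x i * monomialFun q x * ePdf n μ S g x := by
    simpa only [monomialFun_add_single] using hg_mom _ le_rfl
  have hk : Integrable fun x => (x i - μ i) * ePdf n μ S g x := by
    have h_zero := hg_mom 0 (by positivity)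
    have h_single := hg_mom (0 + Pi.single i 1) (by gcongr; positivity)
    simp only [monomialFun_add_single] at h_single
    refine (h_single.sub (h_zero.const_mul (μ i))).congr (.of_forall fun x => ?_)
    simp only [monomialFun, Pi.sub_apply, Pi.zero_apply, pow_zero, Finset.prod_const_one]
    ring
  have hφk (x : Fin n → ℝ) : monomialFun q x * ((x i - μ i) * ePdf n μ S g x) =
      x i * monomialFun q x * ePdf n μ S g x - μ i * (monomialFun q x * ePdf n μ S g x) := by
    ring
  have hterm (j : Fin n) : Integrable fun x =>
      S.col i j * q j * (monomialFun (q - Pi.single j 1) x * ePdf n μ S G x) :=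
    (hG_mom _ tsub_le_self).const_mul _
  have hdφ (x : Fin n → ℝ) : fderiv ℝ (monomialFun q) x (S.col i) * ePdf n μ S G x =
      ∑ j, S.col i j * q j * (monomialFun (q - Pi.single j 1) x * ePdf n μ S G x) := by
    simp only [fderiv_monomialFun_apply, momentLowering, Finset.sum_mul, mul_assoc]
  have hstein := stein_identity_ePdf hS hG hcg hcG (contDiff_monomialFun q) hk
    (by simp only [hφk]; exact hqi.sub (hq.const_mul (μ i))) (hG_mom q le_rfl)
    (by simpa only [hdφ] using integrable_finsetSum _ fun j _ => hterm j)
  simp only [hφk, hdφ] at hstein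
  rw [integral_sub hqi (hq.const_mul _), integral_finsetSum _ fun j _ => hterm j] at hstein
  simp only [integral_const_mul, ← monomialFun_add_single] at hstein
  exact sub_eq_iff_eq_add'.1 hstein

theorem eMom_add_single_add_single (hS : S.PosDef) (hG : ∀ u, G u = ∫ v in Ioi u, g v)
    (hGG : ∀ u, GG u = ∫ v in Ioi u, G v) (hcg : normConst n g ≠ 0) (hcG : normConst n G ≠ 0)
    (hcGG : normConst n GG ≠ 0) {r : Fin n → ℕ}
    (hg_mom : HasMomentsUpTo n μ S g (r + Pi.single i 1 + Pi.single i 1))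
    (hG_mom : HasMomentsUpTo n μ S G (r + Pi.single i 1)) (hGG_mom : HasMomentsUpTo n μ S GG r) :
    eMom n μ S g (r + Pi.single i 1 + Pi.single i 1) =
      normConst n g / normConst n G * S i i * eMom n μ S G r +
      normConst n g / normConst n GG *
        momentLowering (S.col i) (momentLowering (S.col i) (eMom n μ S GG)) r +
      2 * (normConst n g / normConst n G) * μ i * momentLowering (S.col i) (eMom n μ S G) r +
      μ i ^ 2 * eMom n μ S g r := by
  have hle : r ≤ r + Pi.single i 1 := le_self_add
  have hstep₁ := eMom_add_single hS hG hcg hcG (hg_mom.mono le_self_add) (hG_mom.mono hle)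
  have hstep₂ := eMom_add_single hS hG hcg hcG hg_mom hG_mom
  have hstep₃ (j : Fin n) : eMom n μ S G (r - Pi.single j 1 + Pi.single i 1) = _ :=
    eMom_add_single hS hGG hcG hcGG (hG_mom.mono (by gcongr; exact tsub_le_self))
      (hGG_mom.mono tsub_le_self)
  have hlower : momentLowering (S.col i) (fun q => eMom n μ S G (q + Pi.single i 1)) r =
      μ i * momentLowering (S.col i) (eMom n μ S G) r + normConst n G / normConst n GG *
        momentLowering (S.col i) (momentLowering (S.col i) (eMom n μ S GG)) r := by
    change ∑ j, _ = μ i * ∑ j, _ + _ * ∑ j, _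
    simp only [hstep₃, Finset.mul_sum, ← Finset.sum_add_distrib]
    exact Finset.sum_congr rfl fun j _ => by ring
  rw [hstep₂, hstep₁, momentLowering_add_single, hlower, col_apply]
  field_simp
  ring

end Moments

theorem stmt_2_general (n : ℕ) (i1 : Fin n) (μ : Fin n → ℝ) (S : Matrix (Fin n) (Fin n) ℝ)
    (hS : S.PosDef) (g G GG : ℝ → ℝ)
    (hcg : normConst n g ≠ 0)
    (hG : ∀ u : ℝ, G u = ∫ v in Ioi u, g v) (hcG : normConst n G ≠ 0)
    (hGG : ∀ u : ℝ, GG u = ∫ v in Ioi u, G v) (hcGG : normConst n GG ≠ 0)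
    (p : Fin n → ℕ) (hp : 2 ≤ p i1)
    (hg_mom : HasMomentsUpTo n μ S g p)
    (hG_mom : HasMomentsUpTo n μ S G (update p i1 (p i1 - 1)))
    (hGG_mom : HasMomentsUpTo n μ S GG (update p i1 (p i1 - 2))) :
    eMom n μ S g p =
      (normConst n g / normConst n G) * S i1 i1 * eMom n μ S G (update p i1 (p i1 - 2))
      + (normConst n g / normConst n GG) *
          (S i1 i1 ^ 2 * ((p i1 : ℝ) - 2) * ((p i1 : ℝ) - 3) *
              eMom n μ S GG (update p i1 (p i1 - 4))
            + 2 * ∑ j ∈ Finset.univ.erase i1,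
                S i1 i1 * S j i1 * ((p i1 : ℝ) - 2) * (p j : ℝ) *
                  eMom n μ S GG (update (update p i1 (p i1 - 3)) j (p j - 1))
            + ∑ j ∈ Finset.univ.erase i1,
                (S j i1) ^ 2 * (p j : ℝ) * ((p j : ℝ) - 1) *
                  eMom n μ S GG (update (update p i1 (p i1 - 2)) j (p j - 2))
            + ∑ j ∈ Finset.univ.erase i1, ∑ i ∈ (Finset.univ.erase i1).erase j,
                S j i1 * S i i1 * (p j : ℝ) * (p i : ℝ) *
                  eMom n μ S GG (update (update (update p i1 (p i1 - 2)) j (p j - 1)) i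
                    (p i - 1)))
      + 2 * (normConst n g / normConst n G) * μ i1 *
          (S i1 i1 * ((p i1 : ℝ) - 2) * eMom n μ S G (update p i1 (p i1 - 3))
            + ∑ j ∈ Finset.univ.erase i1,
                S j i1 * (p j : ℝ) *
                  eMom n μ S G (update (update p i1 (p i1 - 2)) j (p j - 1)))
      + (μ i1) ^ 2 * eMom n μ S g (update p i1 (p i1 - 2)) := by
  have hp₁ : update p i1 (p i1 - 2) + Pi.single i1 1 = update p i1 (p i1 - 1) := by
    rw [update_add_single_one, show p i1 - 2 + 1 = p i1 - 1 by omega]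
  have hp₂ : update p i1 (p i1 - 2) + Pi.single i1 1 + Pi.single i1 1 = p := by
    rw [update_add_single_one, update_add_single_one, Nat.sub_add_cancel hp, update_eq_self]
  have hrec := eMom_add_single_add_single hS hG hGG hcg hcG hcGG (hp₂ ▸ hg_mom)
    (hp₁ ▸ hG_mom) hGG_mom
  rwa [hp₂, momentLowering_momentLowering_update_sub_two _ _ hp,
    momentLowering_update_sub_two _ _ hp] at hrec

/-- Corollary 1: product-moment recursion for `X ~ E_n(μ, Σ, g_n)`, `X* ~ E_n(μ, Σ, Ḡ_n)`,
`X** ~ E_n(μ, Σ, 𝒢̄_n)` and nonnegative integers `p₁,…,p_n` with `p₁ ≥ 2` such that all the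
expectations appearing below exist and the regularity conditions of Theorem 1 hold for
`f(x) = x₁^(p₁-2) ∏_{k=2}^n x_k^(p_k)`. -/
theorem stmt_2 (n : ℕ) (hn : 0 < n) (i1 : Fin n) (hi1 : i1 = ⟨0, hn⟩)
    (μ : Fin n → ℝ) (S : Matrix (Fin n) (Fin n) ℝ) (hS : S.PosDef)
    (g G GG : ℝ → ℝ)
    (hg0 : ∀ t, 0 ≤ g t) (hgm : Measurable g)
    (hg_int : IntegrableOn (fun t : ℝ => t ^ ((n : ℝ) / 2 - 1) * g t) (Ioi 0))
    (hg_pos : 0 < ∫ t in Ioi (0 : ℝ), t ^ ((n : ℝ) / 2 - 1) * g t)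
    (hG : ∀ u : ℝ, G u = ∫ v in Ioi u, g v)
    (hG_int : IntegrableOn (fun t : ℝ => t ^ ((n : ℝ) / 2 - 1) * G t) (Ioi 0))
    (hG_pos : 0 < ∫ t in Ioi (0 : ℝ), t ^ ((n : ℝ) / 2 - 1) * G t)
    (hGG : ∀ u : ℝ, GG u = ∫ v in Ioi u, G v)
    (hGG_int : IntegrableOn (fun t : ℝ => t ^ ((n : ℝ) / 2 - 1) * GG t) (Ioi 0))
    (hGG_pos : 0 < ∫ t in Ioi (0 : ℝ), t ^ ((n : ℝ) / 2 - 1) * GG t)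
    (p : Fin n → ℕ) (hp : 2 ≤ p i1)
    -- the function f of Theorem 1
    (f : (Fin n → ℝ) → ℝ)
    (hfdef : f = fun x => (x i1) ^ (p i1 - 2) * ∏ k ∈ Finset.univ.erase i1, (x k) ^ p k)
    -- all the expectations appearing below exist
    (hEx_g : ∀ q : Fin n → ℕ, (∀ k, q k ≤ p k) →
      Integrable (fun x : Fin n → ℝ => (∏ k : Fin n, (x k) ^ q k) * ePdf n μ S g x))
    (hEx_G : ∀ q : Fin n → ℕ, (∀ k, q k ≤ p k) →
      Integrable (fun x : Fin n → ℝ => (∏ k : Fin n, (x k) ^ q k) * ePdf n μ S G x))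
    (hEx_GG : ∀ q : Fin n → ℕ, (∀ k, q k ≤ p k) →
      Integrable (fun x : Fin n → ℝ => (∏ k : Fin n, (x k) ^ q k) * ePdf n μ S GG x))
    -- the regularity conditions of Theorem 1 for f
    (A : Matrix (Fin n) (Fin n) ℝ) (hA_low : ∀ i j : Fin n, i < j → A i j = 0)
    (hA : A * Aᵀ = S)
    (hint1 : ∀ i j : Fin n,
      Integrable (fun x : Fin n → ℝ => pd2 n f i j x * ePdf n μ S GG x))
    (hint2 : ∀ i : Fin n, Integrable (fun x : Fin n → ℝ => pd n f i x * ePdf n μ S G x))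
    (hlim1 : ∀ x : Fin n → ℝ, Tendsto
      (fun t : ℝ => t * f (A.mulVec (update x i1 t) + μ) *
        G (1 / 2 * (update x i1 t ⬝ᵥ update x i1 t)))
      (cocompact ℝ) (nhds 0))
    (hlim2 : ∀ x : Fin n → ℝ, Tendsto
      (fun t : ℝ => pd n f i1 (A.mulVec (update x i1 t) + μ) *
        GG (1 / 2 * (update x i1 t ⬝ᵥ update x i1 t)))
      (cocompact ℝ) (nhds 0)) :
    eMom n μ S g p =
      (normConst n g / normConst n G) * S i1 i1 * eMom n μ S G (update p i1 (p i1 - 2))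
      + (normConst n g / normConst n GG) *
          (S i1 i1 ^ 2 * ((p i1 : ℝ) - 2) * ((p i1 : ℝ) - 3) *
              eMom n μ S GG (update p i1 (p i1 - 4))
            + 2 * ∑ j ∈ Finset.univ.erase i1,
                S i1 i1 * S j i1 * ((p i1 : ℝ) - 2) * (p j : ℝ) *
                  eMom n μ S GG (update (update p i1 (p i1 - 3)) j (p j - 1))
            + ∑ j ∈ Finset.univ.erase i1,
                (S j i1) ^ 2 * (p j : ℝ) * ((p j : ℝ) - 1) *
                  eMom n μ S GG (update (update p i1 (p i1 - 2)) j (p j - 2))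
            + ∑ j ∈ Finset.univ.erase i1, ∑ i ∈ (Finset.univ.erase i1).erase j,
                S j i1 * S i i1 * (p j : ℝ) * (p i : ℝ) *
                  eMom n μ S GG (update (update (update p i1 (p i1 - 2)) j (p j - 1)) i
                    (p i - 1)))
      + 2 * (normConst n g / normConst n G) * μ i1 *
          (S i1 i1 * ((p i1 : ℝ) - 2) * eMom n μ S G (update p i1 (p i1 - 3))
            + ∑ j ∈ Finset.univ.erase i1,
                S j i1 * (p j : ℝ) *
                  eMom n μ S G (update (update p i1 (p i1 - 2)) j (p j - 1)))
      + (μ i1) ^ 2 * eMom n μ S g (update p i1 (p i1 - 2)) := by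
  exact stmt_2_general n i1 μ S hS g G GG (normConst_ne_zero hn hg_pos) hG
    (normConst_ne_zero hn hG_pos) hGG (normConst_ne_zero hn hGG_pos) p hp hEx_g
    (fun q hq => hEx_G q (hq.trans (update_le_self_iff.2 (Nat.sub_le _ _))))
    (fun q hq => hEx_GG q (hq.trans (update_le_self_iff.2 (Nat.sub_le _ _))))
end

section
/- Let X be an n-dimensional multivariate normal random vector with mean μ = (μ₁,…,μ_n)ᵀ and positive definite covariance matrix Σ = (σ_{ij}), and let f : ℝⁿ → ℝ be twice continuously differentiable such that all expectations below are finite and lim_{|x₁|→∞} x₁ f(Ax+μ) exp(−xᵀx/2) = 0 and lim_{|x₁|→∞} (∇₁f)(Ax+μ) exp(−xᵀx/2) = 0, where A is the Cholesky factor of Σ. Then E[X₁² f(X)] = Σ_{i=1}^n Σ_{j=1}^n σ_{1i} σ_{1j} E[∇_{i,j} f(X)] + 2μ₁ Σ_{i=1}^n σ_{1i} E[∇_i f(X)] + σ₁₁ E[f(X)] + μ₁² E[f(X)]. -/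
open MeasureTheory Real Set Filter Matrix

/-- The density of the multivariate normal `N_n(μ, Σ)` with positive definite `Σ`:
`(2π)^(-n/2) |Σ|^(-1/2) exp(-(x-μ)ᵀΣ⁻¹(x-μ)/2)`. -/
noncomputable def normalPdf (n : ℕ) (μ : Fin n → ℝ) (S : Matrix (Fin n) (Fin n) ℝ)
    (x : Fin n → ℝ) : ℝ :=
  (2 * π) ^ (-(n : ℝ) / 2) * (Real.sqrt S.det)⁻¹ *
    Real.exp (-(1 / 2) * ((x - μ) ⬝ᵥ S⁻¹.mulVec (x - μ)))

/-!
Along the direction `v = uᵀΣ` the density `p` of `N_n(μ, Σ)` satisfies `D_v p = -⟨u, x - μ⟩ p`.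
Hence `D_v (h p) = (D_v h - ⟨u, x - μ⟩ h) p` for every `h`, and the integral of the right-hand side
vanishes as soon as it and `h p` are integrable. For `h = ⟨u, x + μ⟩ f + D_v f` the possibly
non-integrable terms `⟨u, x⟩ D_v f` cancel, and `D_v h - ⟨u, x - μ⟩ h` becomes
`D_v² f + 2 ⟨u, μ⟩ D_v f + (⟨u, v⟩ + ⟨u, μ⟩²) f - ⟨u, x⟩² f`.
If `u` is the first unit vector, then `v` is the first row of `Σ`.
-/

section IntegrationByParts

variable {E : Type*} [NormedAddCommGroup E] [NormedSpace ℝ E] [FiniteDimensional ℝ E]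
  [MeasurableSpace E] [BorelSpace E] {ν : Measure E} [ν.IsAddHaarMeasure] {v : E}

lemma integral_eq_zero_of_hasLineDerivAt {F : Type*} [NormedAddCommGroup F] [NormedSpace ℝ F]
    {g g' : E → F} (hg : ∀ x, HasLineDerivAt ℝ g (g' x) x v)
    (hg_int : Integrable g ν) (hg'_int : Integrable g' ν) : ∫ x, g' x ∂ν = 0 := by
  have h_one (x : E) : HasLineDerivAt ℝ (fun _ : E => (1 : ℝ)) 0 x v := hasDerivAt_const _ _
  simpa using integral_bilinear_hasLineDerivAt_right_eq_neg_left_of_integrable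
    (B := ContinuousLinearMap.lsmul ℝ ℝ) (by simp) (by simpa using hg'_int)
    (by simpa using hg_int) (fun x _ => h_one x) (fun x _ => hg x)

lemma integral_stein_eq_zero {p s h h' : E → ℝ}
    (hp : ∀ x, HasLineDerivAt ℝ p (-s x * p x) x v)
    (hh : ∀ x, HasLineDerivAt ℝ h (h' x) x v)
    (hhp : Integrable (fun x => h x * p x) ν)
    (h_stein : Integrable (fun x => (h' x - s x * h x) * p x) ν) :
    ∫ x, (h' x - s x * h x) * p x ∂ν = 0 := by
  refine integral_eq_zero_of_hasLineDerivAt (v := v) (fun x => ?_) hhp h_stein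
  refine (HasDerivAt.fun_mul (hh x) (hp x)).congr_deriv ?_
  simp only [zero_smul, add_zero]
  ring

end IntegrationByParts

section WeightedIntegrals

variable {α : Type*} [MeasurableSpace α] {ν : Measure α}

lemma integrable_smul_of_integrable_sq_smul {E : Type*} [NormedAddCommGroup E] [NormedSpace ℝ E]
    {φ : α → ℝ} {g : α → E} (hφ : AEStronglyMeasurable φ ν) (hg : Integrable g ν)
    (hφg : Integrable (fun x => φ x ^ 2 • g x) ν) : Integrable (fun x => φ x • g x) ν := by
  refine (hφg.norm.add hg.norm).mono' (hφ.smul hg.aestronglyMeasurable) (ae_of_all _ fun x => ?_)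
  have h_abs : |φ x| ≤ φ x ^ 2 + 1 := by nlinarith [sq_nonneg (|φ x| - 1), sq_abs (φ x)]
  calc ‖φ x • g x‖ = |φ x| * ‖g x‖ := norm_smul _ _
    _ ≤ (φ x ^ 2 + 1) * ‖g x‖ := by gcongr
    _ = ‖φ x ^ 2 • g x‖ + ‖g x‖ := by
      rw [norm_smul, Real.norm_of_nonneg (sq_nonneg _), add_one_mul]

variable {ι : Type*} [Fintype ι] {c : ι → ℝ} {g : ι → α → ℝ} {p : α → ℝ}

lemma integrable_sum_mul (h : ∀ i, Integrable (fun x => g i x * p x) ν) :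
    Integrable (fun x => (∑ i, c i * g i x) * p x) ν := by
  simp only [Finset.sum_mul, mul_assoc]
  exact integrable_finsetSum _ fun i _ => (h i).const_mul _

lemma integral_sum_mul (h : ∀ i, Integrable (fun x => g i x * p x) ν) :
    ∫ x, (∑ i, c i * g i x) * p x ∂ν = ∑ i, c i * ∫ x, g i x * p x ∂ν := by
  simp only [Finset.sum_mul, mul_assoc]
  rw [integral_finsetSum _ fun i _ => (h i).const_mul _]
  simp only [integral_const_mul]

end WeightedIntegrals

section SecondMoment

variable {E : Type*} [NormedAddCommGroup E] [NormedSpace ℝ E] [FiniteDimensional ℝ E]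
  [MeasurableSpace E] [BorelSpace E] {ν : Measure E} [ν.IsAddHaarMeasure]

lemma integral_sq_mul_of_hasLineDerivAt {p f f' f'' : E → ℝ} {v : E} {φ : E →ₗ[ℝ] ℝ} {m : ℝ}
    (hp : ∀ x, HasLineDerivAt ℝ p (-(φ x - m) * p x) x v)
    (hf : ∀ x, HasLineDerivAt ℝ f (f' x) x v)
    (hf' : ∀ x, HasLineDerivAt ℝ f' (f'' x) x v)
    (h_sq : Integrable (fun x => φ x ^ 2 * f x * p x) ν)
    (h_int : Integrable (fun x => f x * p x) ν)
    (h_int' : Integrable (fun x => f' x * p x) ν)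
    (h_int'' : Integrable (fun x => f'' x * p x) ν) :
    ∫ x, φ x ^ 2 * f x * p x ∂ν =
      (∫ x, f'' x * p x ∂ν) + 2 * m * (∫ x, f' x * p x ∂ν)
      + (φ v + m ^ 2) * ∫ x, f x * p x ∂ν := by
  have hφ : Continuous φ := φ.continuous_of_finiteDimensional
  have h_lin : Integrable (fun x => φ x * (f x * p x)) ν :=
    integrable_smul_of_integrable_sq_smul hφ.aestronglyMeasurable h_int
      (by simpa only [smul_eq_mul, mul_assoc] using h_sq)
  have h_deriv (x : E) : HasLineDerivAt ℝ (fun y => (φ y + m) * f y + f' y)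
      (φ v * f x + (φ x + m) * f' x + f'' x) x v := by
    have hφ_add := (φ.toContinuousLinearMap.hasFDerivAt (x := x)).hasLineDerivAt v
      |>.add_const m
    refine ((hφ_add.fun_mul (hf x)).fun_add (hf' x)).congr_deriv ?_
    simp
  have hp_int : Integrable (fun x => ((φ x + m) * f x + f' x) * p x) ν := by
    simpa only [add_mul, mul_assoc] using (h_lin.fun_add (h_int.const_mul m)).fun_add h_int'
  have h_stein (x : E) : (φ v * f x + (φ x + m) * f' x + f'' x
        - (φ x - m) * ((φ x + m) * f x + f' x)) * p x =
      f'' x * p x + 2 * m * (f' x * p x) + (φ v + m ^ 2) * (f x * p x)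
        - φ x ^ 2 * f x * p x := by
    ring
  have h_first := h_int''.fun_add (h_int'.const_mul (2 * m))
  have h_rhs := h_first.fun_add (h_int.const_mul (φ v + m ^ 2))
  have h_zero := integral_stein_eq_zero hp h_deriv hp_int
    (by simp only [h_stein]; exact h_rhs.sub h_sq)
  simp only [h_stein] at h_zero
  rw [integral_sub h_rhs h_sq, sub_eq_zero, integral_add h_first (h_int.const_mul _),
    integral_add h_int'' (h_int'.const_mul _)] at h_zero
  simpa only [integral_const_mul] using h_zero.symm

end SecondMoment

section LineDerivatives

lemma hasLineDerivAt_dotProduct_mulVec {ι : Type*} [Fintype ι] (M : Matrix ι ι ℝ)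
    (x v : ι → ℝ) :
    HasLineDerivAt ℝ (fun y => y ⬝ᵥ M *ᵥ y) (v ⬝ᵥ M *ᵥ x + x ⬝ᵥ M *ᵥ v) x v := by
  have h_expand (t : ℝ) : (x + t • v) ⬝ᵥ M *ᵥ (x + t • v) =
      x ⬝ᵥ M *ᵥ x + t * (v ⬝ᵥ M *ᵥ x + x ⬝ᵥ M *ᵥ v) + t ^ 2 * (v ⬝ᵥ M *ᵥ v) := by
    simp only [mulVec_add, mulVec_smul, add_dotProduct, dotProduct_add, smul_dotProduct,
      dotProduct_smul, smul_eq_mul]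
    ring
  simp only [HasLineDerivAt, h_expand]
  simpa using (((hasDerivAt_id (0 : ℝ)).mul_const _).const_add _).fun_add
    (((hasDerivAt_id (0 : ℝ)).fun_pow 2).mul_const _)

variable {n : ℕ}

lemma hasLineDerivAt_normalPdf (μ : Fin n → ℝ) {S : Matrix (Fin n) (Fin n) ℝ} (hS : S.IsSymm)
    (hdet : IsUnit S.det) (u x : Fin n → ℝ) :
    HasLineDerivAt ℝ (normalPdf n μ S) (-(u ⬝ᵥ (x - μ)) * normalPdf n μ S x) x (u ᵥ* S) := by
  have h_left : (u ᵥ* S) ⬝ᵥ S⁻¹ *ᵥ (x - μ) = u ⬝ᵥ (x - μ) := by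
    rw [dotProduct_mulVec, vecMul_vecMul, mul_nonsing_inv _ hdet, vecMul_one]
  have h_right : (x - μ) ⬝ᵥ S⁻¹ *ᵥ (u ᵥ* S) = u ⬝ᵥ (x - μ) := by
    rw [← mulVec_transpose, hS.eq, mulVec_mulVec, nonsing_inv_mul _ hdet, one_mulVec,
      dotProduct_comm]
  have h_quad := hasLineDerivAt_dotProduct_mulVec S⁻¹ (x - μ) (u ᵥ* S)
  rw [h_left, h_right] at h_quad
  simp only [HasLineDerivAt, normalPdf, add_sub_right_comm x _ μ] at h_quad ⊢
  refine ((h_quad.const_mul _).exp.const_mul _).congr_deriv ?_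
  simp only [zero_smul, add_zero]
  ring

variable {f : (Fin n → ℝ) → ℝ} {x : Fin n → ℝ}

lemma hasLineDerivAt_sum_pd (hf : DifferentiableAt ℝ f x) (v : Fin n → ℝ) :
    HasLineDerivAt ℝ f (∑ i, v i * pd n f i x) x v := by
  have h_sum : fderiv ℝ f x v = ∑ i, v i * pd n f i x := by
    conv_lhs => rw [pi_eq_sum_univ' v, map_sum]
    simp only [map_smul, smul_eq_mul, pd]
  exact h_sum ▸ hf.hasFDerivAt.hasLineDerivAt v

lemma hasLineDerivAt_sum_pd2 (hf : DifferentiableAt ℝ (fderiv ℝ f) x) (v : Fin n → ℝ) :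
    HasLineDerivAt ℝ (fun y => ∑ j, v j * pd n f j y)
      (∑ j, v j * ∑ i, v i * pd2 n f i j x) x v := by
  have h_pd (j : Fin n) : DifferentiableAt ℝ (fun y => pd n f j y) x :=
    hf.clm_apply (differentiableAt_const _)
  exact HasDerivAt.fun_sum fun j _ => (hasLineDerivAt_sum_pd (h_pd j) v).const_mul (v j)

end LineDerivatives

section NormalDistribution

variable {n : ℕ} {μ : Fin n → ℝ} {S : Matrix (Fin n) (Fin n) ℝ} {f : (Fin n → ℝ) → ℝ}

theorem stmt_7_general (hS : S.PosDef) (hf : Differentiable ℝ f)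
    (hf' : Differentiable ℝ (fderiv ℝ f)) (u : Fin n → ℝ)
    (h_sq : Integrable (fun x => (u ⬝ᵥ x) ^ 2 * f x * normalPdf n μ S x))
    (h_pd2 : ∀ i j, Integrable (fun x => pd2 n f i j x * normalPdf n μ S x))
    (h_pd : ∀ i, Integrable (fun x => pd n f i x * normalPdf n μ S x))
    (h_int : Integrable (fun x => f x * normalPdf n μ S x)) :
    ∫ x, (u ⬝ᵥ x) ^ 2 * f x * normalPdf n μ S x =
      (∑ i, ∑ j, (u ᵥ* S) i * (u ᵥ* S) j * ∫ x, pd2 n f i j x * normalPdf n μ S x)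
      + 2 * (u ⬝ᵥ μ) * (∑ i, (u ᵥ* S) i * ∫ x, pd n f i x * normalPdf n μ S x)
      + (u ᵥ* S ⬝ᵥ u) * (∫ x, f x * normalPdf n μ S x)
      + (u ⬝ᵥ μ) ^ 2 * ∫ x, f x * normalPdf n μ S x := by
  have h_symm : S.IsSymm := isHermitian_iff_isSymm.mp hS.isHermitian
  have hp (x : Fin n → ℝ) : HasLineDerivAt ℝ (normalPdf n μ S)
      (-(dotProductBilin ℝ ℝ u x - u ⬝ᵥ μ) * normalPdf n μ S x) x (u ᵥ* S) := by
    simpa [dotProduct_sub] using hasLineDerivAt_normalPdf μ h_symm hS.det_pos.ne'.isUnit u x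
  have h_inner (j : Fin n) := integrable_sum_mul (c := u ᵥ* S) fun i => h_pd2 i j
  have h_moment := integral_sq_mul_of_hasLineDerivAt hp
    (fun x => hasLineDerivAt_sum_pd (hf x) _) (fun x => hasLineDerivAt_sum_pd2 (hf' x) _)
    h_sq h_int (integrable_sum_mul h_pd) (integrable_sum_mul h_inner)
  have h_double : ∫ x, (∑ j, (u ᵥ* S) j * ∑ i, (u ᵥ* S) i * pd2 n f i j x) * normalPdf n μ S x =
      ∑ i, ∑ j, (u ᵥ* S) i * (u ᵥ* S) j * ∫ x, pd2 n f i j x * normalPdf n μ S x := by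
    have h_integral_inner (j : Fin n) := integral_sum_mul (c := u ᵥ* S) fun i => h_pd2 i j
    rw [integral_sum_mul h_inner]
    simp only [h_integral_inner, Finset.mul_sum]
    rw [Finset.sum_comm]
    simp only [mul_left_comm, mul_assoc]
  rw [h_double, integral_sum_mul h_pd] at h_moment
  simp only [dotProductBilin_apply_apply, dotProduct_comm u (u ᵥ* S)] at h_moment
  linear_combination h_moment

end NormalDistribution

/-- Let `X ~ N_n(μ, Σ)` with positive definite `Σ`, and let `f : ℝⁿ → ℝ` be twice continuously
differentiable such that all expectations below are finite and
`lim_{|x₁|→∞} x₁ f(Ax+μ) exp(-xᵀx/2) = 0` and `lim_{|x₁|→∞} (∇₁f)(Ax+μ) exp(-xᵀx/2) = 0`,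
where `A` is the Cholesky factor of `Σ`. Then
`E[X₁² f(X)] = Σᵢⱼ σ_{1i}σ_{1j} E[∇_{i,j}f(X)] + 2μ₁ Σᵢ σ_{1i} E[∇_i f(X)]
  + σ₁₁ E[f(X)] + μ₁² E[f(X)]`. -/
theorem stmt_7 (n : ℕ) (hn : 0 < n) (i1 : Fin n) (hi1 : i1 = ⟨0, hn⟩)
    (μ : Fin n → ℝ) (S : Matrix (Fin n) (Fin n) ℝ) (hS : S.PosDef)
    (A : Matrix (Fin n) (Fin n) ℝ) (hA_low : ∀ i j : Fin n, i < j → A i j = 0)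
    (hA : A * Aᵀ = S)
    (f : (Fin n → ℝ) → ℝ) (hf : ContDiff ℝ 2 f)
    (hint0 : Integrable (fun x : Fin n → ℝ => (x i1) ^ 2 * f x * normalPdf n μ S x))
    (hint1 : ∀ i j : Fin n,
      Integrable (fun x : Fin n → ℝ => pd2 n f i j x * normalPdf n μ S x))
    (hint2 : ∀ i : Fin n, Integrable (fun x : Fin n → ℝ => pd n f i x * normalPdf n μ S x))
    (hint3 : Integrable (fun x : Fin n → ℝ => f x * normalPdf n μ S x))
    (hlim1 : ∀ x : Fin n → ℝ, Tendsto
      (fun t : ℝ => t * f (A.mulVec (Function.update x i1 t) + μ) *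
        Real.exp (-(Function.update x i1 t ⬝ᵥ Function.update x i1 t) / 2))
      (cocompact ℝ) (nhds 0))
    (hlim2 : ∀ x : Fin n → ℝ, Tendsto
      (fun t : ℝ => pd n f i1 (A.mulVec (Function.update x i1 t) + μ) *
        Real.exp (-(Function.update x i1 t ⬝ᵥ Function.update x i1 t) / 2))
      (cocompact ℝ) (nhds 0)) :
    ∫ x : Fin n → ℝ, (x i1) ^ 2 * f x * normalPdf n μ S x =
      (∑ i : Fin n, ∑ j : Fin n,
        S i1 i * S i1 j * ∫ x : Fin n → ℝ, pd2 n f i j x * normalPdf n μ S x)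
      + 2 * μ i1 * (∑ i : Fin n, S i1 i * ∫ x : Fin n → ℝ, pd n f i x * normalPdf n μ S x)
      + S i1 i1 * (∫ x : Fin n → ℝ, f x * normalPdf n μ S x)
      + (μ i1) ^ 2 * ∫ x : Fin n → ℝ, f x * normalPdf n μ S x := by
  have hf' : Differentiable ℝ (fderiv ℝ f) :=
    (hf.fderiv_right (m := 1) (by norm_num)).differentiable_one
  simpa using stmt_7_general hS (hf.differentiable two_ne_zero) hf' (Pi.single i1 1)
    (by simpa using hint0) hint1 hint2 hint3
end
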